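/- Suppose f is such a piecewise-C² one-parameter family with β > 0, (a_L − 1)(a_R − 1) > 0, (a_L + 1)(a_R + 1) > 0, a_L ≠ 0, and a_R ≠ 0, and let ν(μ) = f(0;μ). Then there exist μ₀ > 0, continuous functions s_L, s_R : (−μ₀, μ₀) → ℝ with s_L(μ) = a_L + O(μ) and s_R(μ) = a_R + O(μ) as μ → 0, and open neighbourhoods N of 0 and M(μ) of 0, such that f(·;μ) on N and the extended normal form g(·; ν(μ), s_L(μ), s_R(μ), 0) on M(μ) are differentiably conjugate for every μ ∈ (−μ₀, μ₀). Moreover, for any δ > 0 one can choose μ₀ > 0, N = (−p, p), and M(μ) = (q⁻(μ), q⁺(μ)) so that (1 − δ)p < |q⁻(μ)| < (1 + δ)p and (1 − δ)p < |q⁺(μ)| < (1 + δ)p for all μ ∈ (−μ₀, μ₀). -/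

import Mathlib

/-- The piecewise-smooth family: `f(x;μ) = f_L(x;μ)` for `x ≤ 0` and `f_R(x;μ)` for `x > 0`
(these agree when the continuity condition `f_L(0;μ) = f_R(0;μ)` holds). -/
noncomputable def pwFam (fL fR : ℝ → ℝ → ℝ) (μ : ℝ) : ℝ → ℝ :=
  fun x => if x ≤ 0 then fL x μ else fR x μ

/-- The extended normal form `g(y; ν, s_L, s_R, t)`. -/
noncomputable def enf (ν sL sR t : ℝ) : ℝ → ℝ :=
  fun y => if y ≤ 0 then ν + sL * y + t * y ^ 2 else ν + sR * y

/-- `h` is a `C¹` diffeomorphism from `U` onto `V`. -/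
def IsDiffeoOn (h : ℝ → ℝ) (U V : Set ℝ) : Prop :=
  Set.BijOn h U V ∧ ContDiffOn ℝ 1 h U ∧
    ∃ hinv : ℝ → ℝ, Set.InvOn hinv h U V ∧ ContDiffOn ℝ 1 hinv V

/-- `h` intertwines `f` and `g` on `U`: `h (f x) = g (h x)` for all `x ∈ U` with `f x ∈ U`. -/
def ConjRelOn (h f g : ℝ → ℝ) (U : Set ℝ) : Prop :=
  ∀ x ∈ U, f x ∈ U → h (f x) = g (h x)

/-- `f` on `U` is differentiably conjugate to `g` on `V`. -/
def DiffConjOn (f g : ℝ → ℝ) (U V : Set ℝ) : Prop :=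
  ∃ h : ℝ → ℝ, IsDiffeoOn h U V ∧ ConjRelOn h f g U

/-!
On each side of `0` the derivative of `f = f(·; μ)` is a constant, `kL` or `kR`, times `exp ∘ ℓ`,
where `ℓ` is Lipschitz and vanishes at `0`, hence is continuous across the corner. The slope
conditions say that both branches lie on the same side of `1` and of `-1`, so near `0` either `f` or
its inverse is a contraction of an interval `[-p, p]`, with a fixed point `x*`. Summing
`ℓ - ℓ(x*)` along the contracting orbits solves the cohomological equation `u = ℓ - ℓ(x*) + u ∘ f`
with `u` continuous and of size `O(p)`. Then `h(x) = ∫₀ˣ exp u` satisfies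
`(h ∘ f)' = k exp(ℓ(x*)) h'` on each side, so `h` conjugates `f` to a piecewise linear map with
slopes `kL exp(ℓ(x*))` and `kR exp(ℓ(x*))`. By the mean value theorem for integrals, subtracting
from `u` one of its values arranges `h(f(0)) = f(0)`, which keeps the offset `ν`, and `h` remains
`exp(O(p))`-close to the identity. The slopes depend on `μ` through `x*(μ)`, which is Lipschitz.
-/

open Set Filter Topology
open scoped NNReal

section Slopes

variable {f : ℝ → ℝ} {s J : Set ℝ} {κ : ℝ≥0}

/-- All difference quotients of `f` between distinct points of `s` lie in `J`. -/
def SlopesIn (f : ℝ → ℝ) (s J : Set ℝ) : Prop :=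
  ∀ x ∈ s, ∀ y ∈ s, x ≠ y → slope f x y ∈ J

/-- `J` is one of the three intervals of slopes that stay away from `1` and `-1`: increasing
expansion, contraction, or decreasing expansion. The rate `κ < 1` bounds the slopes of whichever of
the map and its inverse contracts. -/
def IsSlopeRange (κ : ℝ≥0) (J : Set ℝ) : Prop :=
  J = Ici (κ : ℝ)⁻¹ ∨ J = Icc (-(κ : ℝ)) κ ∨ J = Iic (-(κ : ℝ)⁻¹)

theorem IsSlopeRange.convex (hJ : IsSlopeRange κ J) : Convex ℝ J := by
  rcases hJ with rfl | rfl | rfl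
  exacts [convex_Ici _, convex_Icc _ _, convex_Iic _]

theorem one_sub_le_inv_sub_one {κ : ℝ} (hκ : 0 < κ) : 1 - κ ≤ κ⁻¹ - 1 := by
  have hamgm := two_mul_le_add_sq 1 κ
  field_simp
  linarith

theorem IsSlopeRange.one_sub_le_abs_sub_one (hJ : IsSlopeRange κ J) (hκ : 0 < κ) {j : ℝ}
    (hj : j ∈ J) : 1 - (κ : ℝ) ≤ |j - 1| := by
  have hinv := one_sub_le_inv_sub_one (NNReal.coe_pos.2 hκ)
  rcases hJ with rfl | rfl | rfl <;> rw [le_abs]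
  · exact Or.inl (hinv.trans (sub_le_sub_right hj 1))
  · exact Or.inr (by linarith [hj.2])
  · exact Or.inr (by linarith [show j ≤ -(κ : ℝ)⁻¹ from hj, κ.coe_nonneg])

theorem exists_isSlopeRange_mem_nhds {a b : ℝ} (hsub : 0 < (a - 1) * (b - 1))
    (hadd : 0 < (a + 1) * (b + 1)) :
    ∃ κ : ℝ≥0, 0 < κ ∧ κ < 1 ∧ ∃ J, IsSlopeRange κ J ∧ J ∈ 𝓝 a ∧ J ∈ 𝓝 b := by
  rcases mul_pos_iff.1 hsub with ⟨ha, hb⟩ | ⟨ha, hb⟩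
  · obtain ⟨c, hc, hcab⟩ := exists_between (lt_min (sub_pos.1 ha) (sub_pos.1 hb))
    lift c to ℝ≥0 using by linarith
    have hc1 : 1 < c := mod_cast hc
    refine ⟨c⁻¹, inv_pos.2 (zero_lt_one.trans hc1), inv_lt_one_of_one_lt₀ hc1, Ici c,
      Or.inl (by simp), ?_⟩
    exact ⟨Ici_mem_nhds (lt_min_iff.1 hcab).1, Ici_mem_nhds (lt_min_iff.1 hcab).2⟩
  rcases mul_pos_iff.1 hadd with ⟨ha', hb'⟩ | ⟨ha', hb'⟩
  · obtain ⟨c, hcab, hc⟩ := exists_between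
      (max_lt (abs_lt.2 ⟨by linarith, sub_neg.1 ha⟩) (abs_lt.2 ⟨by linarith, sub_neg.1 hb⟩))
    obtain ⟨hac, hbc⟩ := max_lt_iff.1 hcab
    have hc0 : 0 < c := (abs_nonneg a).trans_lt hac
    lift c to ℝ≥0 using hc0.le
    refine ⟨c, mod_cast hc0, mod_cast hc, Icc (-c) c, Or.inr (Or.inl rfl), ?_⟩
    rw [abs_lt] at hac hbc
    exact ⟨Icc_mem_nhds hac.1 hac.2, Icc_mem_nhds hbc.1 hbc.2⟩
  · obtain ⟨c, hcab, hc⟩ := exists_between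
      (show max a b < -1 from max_lt (by linarith) (by linarith))
    obtain ⟨d, rfl⟩ : ∃ d, c = -d := ⟨-c, (neg_neg c).symm⟩
    lift d to ℝ≥0 using by linarith
    have hd1 : 1 < d := NNReal.coe_lt_coe.1 (neg_lt_neg_iff.1 hc)
    refine ⟨d⁻¹, inv_pos.2 (zero_lt_one.trans hd1), inv_lt_one_of_one_lt₀ hd1, Iic (-d),
      Or.inr (Or.inr (by simp)), ?_⟩
    exact ⟨Iic_mem_nhds (max_lt_iff.1 hcab).1, Iic_mem_nhds (max_lt_iff.1 hcab).2⟩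

theorem SlopesIn.mono {t : Set ℝ} (h : SlopesIn f t J) (hst : s ⊆ t) : SlopesIn f s J :=
  fun x hx y hy hxy ↦ h x (hst hx) y (hst hy) hxy

theorem slopesIn_of_lt (h : ∀ x ∈ s, ∀ y ∈ s, x < y → slope f x y ∈ J) : SlopesIn f s J := by
  intro x hx y hy hxy
  rcases hxy.lt_or_gt with hlt | hlt
  · exact h x hx y hy hlt
  · exact slope_comm f x y ▸ h y hy x hx hlt

theorem slopesIn_of_hasDerivWithinAt {f' : ℝ → ℝ} (hs : s.OrdConnected)
    (hf : ∀ x ∈ s, HasDerivWithinAt f (f' x) s x) (hf' : ∀ x ∈ s, f' x ∈ J) : SlopesIn f s J := by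
  refine slopesIn_of_lt fun x hx y hy hxy ↦ ?_
  have hsub : Icc x y ⊆ s := hs.out hx hy
  obtain ⟨c, hc, hslope⟩ := exists_hasDerivAt_eq_slope f f' hxy
    (fun t ht ↦ ((hf t (hsub ht)).continuousWithinAt).mono hsub)
    (fun t ht ↦ ((hf t (hsub (Ioo_subset_Icc_self ht))).mono hsub).hasDerivAt
      (Icc_mem_nhds ht.1 ht.2))
  rw [slope_def_field, ← hslope]
  exact hf' c (hsub (Ioo_subset_Icc_self hc))

theorem SlopesIn.union_Iic_Ici {c : ℝ} (hJ : Convex ℝ J) (hc : c ∈ s)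
    (hleft : SlopesIn f (s ∩ Iic c) J) (hright : SlopesIn f (s ∩ Ici c) J) : SlopesIn f s J := by
  refine slopesIn_of_lt fun x hx y hy hxy ↦ ?_
  rcases le_or_gt y c with hyc | hcy
  · exact hleft x ⟨hx, hxy.le.trans hyc⟩ y ⟨hy, hyc⟩ hxy.ne
  rcases le_or_gt c x with hcx | hxc
  · exact hright x ⟨hx, hcx⟩ y ⟨hy, hcy.le⟩ hxy.ne
  have hxc_mem := hleft x ⟨hx, hxc.le⟩ c ⟨hc, self_mem_Iic⟩ hxc.ne
  have hcy_mem := hright c ⟨hc, self_mem_Ici⟩ y ⟨hy, hcy.le⟩ hcy.ne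
  rw [← lineMap_slope_slope_sub_div_sub f x c y hxy.ne]
  exact hJ.lineMap_mem hxc_mem hcy_mem ⟨div_nonneg (by linarith) (by linarith),
    (div_le_one (by linarith)).2 (by linarith)⟩

theorem slope_mul_sub (f : ℝ → ℝ) (x y : ℝ) : slope f x y * (y - x) = f y - f x := by
  rw [mul_comm]
  exact sub_smul_slope f x y

theorem SlopesIn.lipschitzOnWith (h : SlopesIn f s (Icc (-(κ : ℝ)) κ)) :
    LipschitzOnWith κ f s := by
  refine LipschitzOnWith.of_dist_le_mul fun x hx y hy ↦ ?_
  rcases eq_or_ne x y with rfl | hxy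
  · simp
  rw [Real.dist_eq, Real.dist_eq, ← slope_mul_sub f y x, abs_mul]
  gcongr
  exact abs_le.2 (h y hy x hx hxy.symm)

theorem SlopesIn.mul_abs_sub_le {c m : ℝ} (h : SlopesIn f s J) (hJ : ∀ j ∈ J, m ≤ |j - c|)
    {x y : ℝ} (hx : x ∈ s) (hy : y ∈ s) : m * |x - y| ≤ |(f x - c * x) - (f y - c * y)| := by
  rcases eq_or_ne x y with rfl | hxy
  · simp
  calc m * |x - y| ≤ |slope f y x - c| * |x - y| := by gcongr; exact hJ _ (h y hy x hx hxy.symm)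
    _ = |(f x - c * x) - (f y - c * y)| := by
      rw [← abs_mul, sub_mul, slope_mul_sub]
      ring_nf

theorem SlopesIn.one_sub_mul_abs_sub_le (h : SlopesIn f s J) (hJ : IsSlopeRange κ J) (hκ : 0 < κ)
    {x y : ℝ} (hx : x ∈ s) (hy : y ∈ s) : (1 - (κ : ℝ)) * |x - y| ≤ |(f x - x) - (f y - y)| := by
  simpa using h.mul_abs_sub_le (fun j hj ↦ hJ.one_sub_le_abs_sub_one hκ hj) hx hy

end Slopes

section ContractingBranch

variable {f : ℝ → ℝ} {J : Set ℝ} {κ : ℝ≥0} {p : ℝ}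

theorem mapsTo_Icc_of_lipschitzOnWith (hf : LipschitzOnWith κ f (Icc (-p) p)) (hp : 0 ≤ p)
    (hf0 : |f 0| ≤ (1 - κ) * p) : MapsTo f (Icc (-p) p) (Icc (-p) p) := by
  intro x hx
  have hx0 : |f x - f 0| ≤ κ * |x| := by
    simpa [Real.dist_eq] using hf.dist_le_mul x hx 0 ⟨by linarith, hp⟩
  refine abs_le.1 ?_
  calc |f x| ≤ |f x - f 0| + |f 0| := by simpa using abs_add_le (f x - f 0) (f 0)
    _ ≤ κ * p + (1 - κ) * p := by gcongr; exact hx0.trans (by gcongr; exact abs_le.2 hx)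
    _ = p := by ring

theorem SlopesIn.surjOn_Icc (h : SlopesIn f (Icc (-p) p) J) (hp : 0 < p) (hκ : 0 < κ)
    (hJ : J = Ici (κ : ℝ)⁻¹ ∨ J = Iic (-(κ : ℝ)⁻¹)) (hf : ContinuousOn f (Icc (-p) p))
    (hf0 : |f 0| ≤ (1 - κ) * p) : SurjOn f (Icc (-p) p) (Icc (-p) p) := by
  have hmem0 : (0 : ℝ) ∈ Icc (-p) p := ⟨by linarith, hp.le⟩
  have hmemn : -p ∈ Icc (-p) p := ⟨le_rfl, by linarith⟩
  have hmemp : p ∈ Icc (-p) p := ⟨by linarith, le_rfl⟩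
  have hright := h 0 hmem0 p hmemp hp.ne
  have hleft := h (-p) hmemn 0 hmem0 (by linarith)
  have hfp := slope_mul_sub f 0 p
  have hfn := slope_mul_sub f (-p) 0
  have hinv := mul_le_mul_of_nonneg_right (one_sub_le_inv_sub_one (NNReal.coe_pos.2 hκ)) hp.le
  obtain ⟨hlow, hupp⟩ := abs_le.1 hf0
  rcases hJ with rfl | rfl
  · refine (Icc_subset_Icc ?_ ?_).trans (hf.surjOn_Icc hmemn hmemp)
    · linarith [mul_le_mul_of_nonneg_right (mem_Ici.1 hleft) hp.le]
    · linarith [mul_le_mul_of_nonneg_right (mem_Ici.1 hright) hp.le]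
  · refine (Icc_subset_Icc ?_ ?_).trans (hf.surjOn_Icc hmemp hmemn)
    · linarith [mul_le_mul_of_nonneg_right (mem_Iic.1 hright) hp.le]
    · linarith [mul_le_mul_of_nonneg_right (mem_Iic.1 hleft) hp.le]

theorem SlopesIn.exists_contractingWith (h : SlopesIn f (Icc (-p) p) J) (hJ : IsSlopeRange κ J)
    (hκ : 0 < κ) (hκ1 : κ < 1) (hp : 0 < p) (hf : ContinuousOn f (Icc (-p) p))
    (hf0 : |f 0| ≤ (1 - κ) * p) :
    ∃ T : Icc (-p) p → Icc (-p) p, ContractingWith κ T ∧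
      ((∀ x y : Icc (-p) p, f x = y ↔ T x = y) ∨ (∀ x y : Icc (-p) p, f x = y ↔ T y = x)) := by
  by_cases hJc : J = Icc (-(κ : ℝ)) κ
  · have hlip : LipschitzOnWith κ f (Icc (-p) p) := (hJc ▸ h).lipschitzOnWith
    have hmaps := mapsTo_Icc_of_lipschitzOnWith hlip hp.le hf0
    exact ⟨hmaps.restrict, ⟨hκ1, hlip.mapsToRestrict hmaps⟩,
      Or.inl fun x y ↦ (Subtype.ext_iff (a1 := hmaps.restrict f _ _ x)).symm⟩
  have hJe : J = Ici (κ : ℝ)⁻¹ ∨ J = Iic (-(κ : ℝ)⁻¹) := by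
    simpa only [IsSlopeRange, hJc, false_or] using hJ
  have hexp : ∀ x y : Icc (-p) p, |(x : ℝ) - y| ≤ κ * |f x - f y| := by
    intro x y
    have hmem : ∀ j ∈ J, (κ : ℝ)⁻¹ ≤ |j - 0| := by
      intro j hj
      rw [sub_zero, le_abs, le_neg]
      rcases hJe with rfl | rfl
      exacts [Or.inl hj, Or.inr hj]
    have hinv := h.mul_abs_sub_le hmem x.2 y.2
    simp only [zero_mul, sub_zero] at hinv
    rwa [inv_mul_le_iff₀ (NNReal.coe_pos.2 hκ)] at hinv
  have hsurj : ∀ y : Icc (-p) p, ∃ x : Icc (-p) p, f x = y := fun y ↦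
    let ⟨x, hx, hxy⟩ := h.surjOn_Icc hp hκ hJe hf hf0 y.2
    ⟨⟨x, hx⟩, hxy⟩
  choose T hT using hsurj
  refine ⟨T, ⟨hκ1, LipschitzWith.of_dist_le_mul fun x y ↦ ?_⟩, Or.inr fun x y ↦ ⟨fun hxy ↦ ?_, ?_⟩⟩
  · simpa only [hT, Subtype.dist_eq, Real.dist_eq] using hexp (T x) (T y)
  · have hle := hexp (T y) x
    rw [hT, hxy, sub_self, abs_zero, mul_zero] at hle
    exact Subtype.ext (sub_eq_zero.1 (abs_nonpos_iff.1 hle))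
  · rintro rfl
    exact hT y

theorem SlopesIn.exists_fixedPoint (h : SlopesIn f (Icc (-p) p) J) (hJ : IsSlopeRange κ J)
    (hκ : 0 < κ) (hκ1 : κ < 1) (hp : 0 < p) (hf : ContinuousOn f (Icc (-p) p))
    (hf0 : |f 0| ≤ (1 - κ) * p) : ∃ x ∈ Icc (-p) p, f x = x := by
  obtain ⟨T, hT, hfT⟩ := h.exists_contractingWith hJ hκ hκ1 hp hf hf0
  have : Nonempty (Icc (-p) p) := ⟨⟨0, by linarith, hp.le⟩⟩
  have hfix := hT.fixedPoint_isFixedPt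
  refine ⟨_, (hT.fixedPoint T).2, ?_⟩
  rcases hfT with hfT | hfT <;> exact (hfT _ _).2 hfix

end ContractingBranch

section CohomologicalEquation

variable {κ K : ℝ≥0}

theorem exists_continuous_cohomological_solution {X : Type*} [MetricSpace X] {T : X → X}
    (hT : ContractingWith κ T) {x₀ : X} (hx₀ : T x₀ = x₀) {w : X → ℝ} (hw : LipschitzWith K w)
    {B : ℝ} (hB : ∀ x, dist x x₀ ≤ B) :
    ∃ u : X → ℝ, Continuous u ∧ (∀ x, u x = w x - w x₀ + u (T x)) ∧
      ∀ x, |u x| ≤ K * B / (1 - κ) := by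
  have hκ1 : (κ : ℝ) < 1 := mod_cast hT.1
  have hterm : ∀ n x, ‖w (T^[n] x) - w x₀‖ ≤ K * B * (κ : ℝ) ^ n := by
    intro n x
    calc ‖w (T^[n] x) - w x₀‖ ≤ K * dist (T^[n] x) (T^[n] x₀) := by
          rw [Function.iterate_fixed hx₀ n]
          exact hw.dist_le_mul _ _
      _ ≤ K * ((κ : ℝ) ^ n * B) := by
          gcongr
          refine ((hT.2.iterate n).dist_le_mul x x₀).trans ?_
          rw [NNReal.coe_pow]
          gcongr
          exact hB x
      _ = K * B * (κ : ℝ) ^ n := by ring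
  have hgeom := (hasSum_geometric_of_lt_one κ.coe_nonneg hκ1).mul_left (K * B)
  have hsum : ∀ x, Summable fun n ↦ w (T^[n] x) - w x₀ := fun x ↦
    Summable.of_norm_bounded hgeom.summable fun n ↦ hterm n x
  refine ⟨fun x ↦ ∑' n, (w (T^[n] x) - w x₀), ?_, fun x ↦ ?_, fun x ↦ ?_⟩
  · exact continuous_tsum
      (fun n ↦ (hw.continuous.comp (hT.2.continuous.iterate n)).sub continuous_const)
      hgeom.summable hterm
  · exact (hsum x).tsum_eq_zero_add
  · exact (div_eq_mul_inv (K * B : ℝ) _) ▸ tsum_of_norm_bounded hgeom fun n ↦ hterm n x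

theorem SlopesIn.exists_cohomological_solution {f ℓ : ℝ → ℝ} {J : Set ℝ} {p x₀ : ℝ}
    (h : SlopesIn f (Icc (-p) p) J) (hJ : IsSlopeRange κ J)
    (hκ : 0 < κ) (hκ1 : κ < 1) (hp : 0 < p) (hf : ContinuousOn f (Icc (-p) p))
    (hf0 : |f 0| ≤ (1 - κ) * p) (hx₀ : x₀ ∈ Icc (-p) p) (hfx₀ : f x₀ = x₀)
    (hℓ : LipschitzOnWith K ℓ (Icc (-p) p)) :
    ∃ u : ℝ → ℝ, Continuous u ∧ (∀ x, |u x| ≤ K * (2 * p) / (1 - κ)) ∧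
      ∀ x ∈ Icc (-p) p, f x ∈ Icc (-p) p → u x = ℓ x - ℓ x₀ + u (f x) := by
  have hpp : -p ≤ p := by linarith
  obtain ⟨T, hT, hfT⟩ := h.exists_contractingWith hJ hκ hκ1 hp hf hf0
  have hTx₀ : T ⟨x₀, hx₀⟩ = ⟨x₀, hx₀⟩ := by
    rcases hfT with hfT | hfT <;> exact (hfT ⟨x₀, hx₀⟩ ⟨x₀, hx₀⟩).1 hfx₀
  have hdist : ∀ x : Icc (-p) p, dist x ⟨x₀, hx₀⟩ ≤ 2 * p := fun x ↦
    (Real.dist_le_of_mem_Icc x.2 hx₀).trans_eq (by ring)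
  obtain ⟨u, hu, hueq, hubound⟩ :=
    exists_continuous_cohomological_solution hT hTx₀ hℓ.to_restrict hdist
  rcases hfT with hfT | hfT
  · refine ⟨IccExtend hpp u, hu.Icc_extend', fun x ↦ hubound _, fun x hx hfx ↦ ?_⟩
    rw [IccExtend_of_mem _ _ hx, IccExtend_of_mem _ _ hfx, hueq, (hfT ⟨x, hx⟩ ⟨f x, hfx⟩).1 rfl]
    rfl
  · -- For the inverse branch the sum runs along the backward orbit, starting at its second term.
    refine ⟨IccExtend hpp fun x ↦ -u (T x), (hu.comp hT.2.continuous).neg.Icc_extend', fun x ↦ ?_,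
      fun x hx hfx ↦ ?_⟩
    · simpa only [IccExtend, Function.comp_apply, abs_neg] using hubound _
    · rw [IccExtend_of_mem _ _ hx, IccExtend_of_mem _ _ hfx, (hfT ⟨x, hx⟩ ⟨f x, hfx⟩).1 rfl,
        hueq ⟨x, hx⟩]
      simp only [domRestrict_apply]
      ring

end CohomologicalEquation

section Linearization

theorem isDiffeoOn_Ioo_of_hasStrictDerivAt {h h' : ℝ → ℝ} (hh : ∀ x, HasStrictDerivAt h (h' x) x)
    (hh' : ∀ x, 0 < h' x) (hcont : Continuous h') (a b : ℝ) :
    IsDiffeoOn h (Ioo a b) (Ioo (h a) (h b)) := by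
  have hderiv : deriv h = h' := deriv_eq fun x ↦ (hh x).hasDerivAt
  have hmono : StrictMono h := strictMono_of_deriv_pos (hderiv ▸ hh')
  have hdiff : Differentiable ℝ h := fun x ↦ (hh x).hasDerivAt.differentiableAt
  have hC1 : ContDiff ℝ 1 h := contDiff_one_iff_deriv.2 ⟨hdiff, hderiv ▸ hcont⟩
  have hemb : IsOpenEmbedding h := .of_continuous_injective_isOpenMap hdiff.continuous
    hmono.injective (isOpenMap_of_hasStrictDerivAt hh fun x ↦ (hh' x).ne')
  have hsurj : SurjOn h (Ioo a b) (Ioo (h a) (h b)) := fun y hy ↦ by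
    have hab : a < b := hmono.lt_iff_lt.1 (hy.1.trans hy.2)
    exact intermediate_value_Ioo hab.le hdiff.continuous.continuousOn hy
  let e := hemb.toOpenPartialHomeomorph h
  have hleft : ∀ x, e.symm (h x) = x := fun x ↦ e.left_inv (mem_univ x)
  refine ⟨⟨fun x hx ↦ ⟨hmono hx.1, hmono hx.2⟩, hmono.injective.injOn, hsurj⟩, hC1.contDiffOn,
    e.symm, ⟨fun x _ ↦ hleft x, fun y hy ↦ ?_⟩, fun y hy ↦ ?_⟩
  all_goals obtain ⟨x, -, rfl⟩ := hsurj hy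
  · rw [hleft]
  · refine (e.contDiffAt_symm_deriv (hh' x).ne' ?_ ?_ ?_).contDiffWithinAt
    · exact hemb.toOpenPartialHomeomorph_target h ▸ mem_range_self x
    · exact (hleft x).symm ▸ (hh x).hasDerivAt
    · exact hC1.contDiffAt

theorem exists_intervalIntegral_eq_mul {g : ℝ → ℝ} (hg : Continuous g) (a b : ℝ) :
    ∃ t, ∫ x in a..b, g x = g t * (b - a) := by
  obtain ⟨t, -, ht⟩ := exists_eq_const_mul_intervalIntegral_of_nonneg (g := fun _ ↦ 1)
    (a := a) (b := b) (μ := MeasureTheory.volume) hg.continuousOn intervalIntegrable_const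
    fun _ _ ↦ zero_le_one
  exact ⟨t, by simpa using ht⟩

theorem sub_eq_mul_sub_of_hasDerivWithinAt {h h' F F' : ℝ → ℝ} {k a b : ℝ}
    (hh : ∀ t, HasDerivAt h (h' t) t)
    (hF : ∀ t ∈ uIcc a b, HasDerivWithinAt F (F' t) (uIcc a b) t)
    (hchain : ∀ t ∈ uIcc a b, h' (F t) * F' t = k * h' t) :
    h (F b) - h (F a) = k * (h b - h a) := by
  have hzero : ∀ t ∈ uIcc a b, HasDerivWithinAt (fun t ↦ h (F t) - k * h t) 0 (uIcc a b) t := by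
    intro t ht
    have hcomp := (hh (F t)).comp_hasDerivWithinAt t (hF t ht)
    rw [hchain t ht] at hcomp
    exact sub_self (k * h' t) ▸ hcomp.sub ((hh t).hasDerivWithinAt.const_mul k)
  have hconst := (convex_uIcc a b).norm_image_sub_le_of_norm_hasDerivWithin_le (C := 0) hzero
    (fun t _ ↦ norm_zero.le) left_mem_uIcc right_mem_uIcc
  rw [zero_mul, norm_le_zero_iff] at hconst
  linarith

theorem mapsTo_uIcc_of_hasDerivWithinAt_mul_exp {F ℓ : ℝ → ℝ} {k a b : ℝ}
    (hF : ∀ t ∈ uIcc a b, HasDerivWithinAt F (k * Real.exp (ℓ t)) (uIcc a b) t) :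
    MapsTo F (uIcc a b) (uIcc (F a) (F b)) := by
  have hcont : ContinuousOn F (uIcc a b) := fun t ht ↦ (hF t ht).continuousWithinAt
  have hint : ∀ t ∈ interior (uIcc a b),
      HasDerivWithinAt F (k * Real.exp (ℓ t)) (interior (uIcc a b)) t := fun t ht ↦
    (hF t (interior_subset ht)).mono interior_subset
  rcases le_total 0 k with hk | hk
  · exact mapsTo_iff_image_subset.2 (monotoneOn_of_hasDerivWithinAt_nonneg (convex_uIcc a b) hcont
      hint fun t _ ↦ by positivity).image_uIcc_subset
  · exact mapsTo_iff_image_subset.2 (antitoneOn_of_hasDerivWithinAt_nonpos (convex_uIcc a b) hcont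
      hint fun t _ ↦ mul_nonpos_of_nonpos_of_nonneg hk (Real.exp_pos _).le).image_uIcc_subset

/-- The map `f` has one-sided derivatives `kL * exp ∘ ℓ` on the nonpositive part and `kR * exp ∘ ℓ`
on the nonnegative part of `s`. The jump of the derivative at `0` is carried by the two constants
alone, so that the logarithmic distortion `ℓ` may be continuous across `0`. -/
structure HasSplitDerivOn (f ℓ : ℝ → ℝ) (kL kR : ℝ) (s : Set ℝ) : Prop where
  left : ∀ x ∈ s, x ≤ 0 → HasDerivWithinAt f (kL * Real.exp (ℓ x)) (Iic 0) x
  right : ∀ x ∈ s, 0 ≤ x → HasDerivWithinAt f (kR * Real.exp (ℓ x)) (Ici 0) x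

namespace HasSplitDerivOn

variable {f ℓ : ℝ → ℝ} {kL kR : ℝ} {s : Set ℝ}

theorem mono {t : Set ℝ} (hf : HasSplitDerivOn f ℓ kL kR t) (hst : s ⊆ t) :
    HasSplitDerivOn f ℓ kL kR s :=
  ⟨fun x hx ↦ hf.left x (hst hx), fun x hx ↦ hf.right x (hst hx)⟩

theorem continuousOn (hf : HasSplitDerivOn f ℓ kL kR s) : ContinuousOn f s := by
  intro x hx
  refine ContinuousAt.continuousWithinAt ?_
  rcases lt_trichotomy x 0 with hx0 | rfl | hx0
  · exact (hf.left x hx hx0.le).continuousWithinAt.continuousAt (Iic_mem_nhds hx0)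
  · exact continuousAt_iff_continuous_left_right.2
      ⟨(hf.left 0 hx le_rfl).continuousWithinAt, (hf.right 0 hx le_rfl).continuousWithinAt⟩
  · exact (hf.right x hx hx0.le).continuousWithinAt.continuousAt (Ici_mem_nhds hx0)

theorem slopesIn {J : Set ℝ} (hf : HasSplitDerivOn f ℓ kL kR s) (hs : s.OrdConnected) (h0 : 0 ∈ s)
    (hJ : Convex ℝ J) (hL : ∀ x ∈ s, x ≤ 0 → kL * Real.exp (ℓ x) ∈ J)
    (hR : ∀ x ∈ s, 0 ≤ x → kR * Real.exp (ℓ x) ∈ J) : SlopesIn f s J := by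
  refine SlopesIn.union_Iic_Ici hJ h0 ?_ ?_
  · exact slopesIn_of_hasDerivWithinAt (hs.inter ordConnected_Iic)
      (fun x hx ↦ (hf.left x hx.1 hx.2).mono inter_subset_right) fun x hx ↦ hL x hx.1 hx.2
  · exact slopesIn_of_hasDerivWithinAt (hs.inter ordConnected_Ici)
      (fun x hx ↦ (hf.right x hx.1 hx.2).mono inter_subset_right) fun x hx ↦ hR x hx.1 hx.2

end HasSplitDerivOn

-- Exponentiating the cohomological equation turns the chain rule into `(h ∘ F)' = k * exp c * h'`.
theorem sub_eq_mul_sub_of_cohomological {h u F ℓ : ℝ → ℝ} {s : Set ℝ} {k c a b : ℝ}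
    (hs : s.OrdConnected) (hh : ∀ t, HasDerivAt h (Real.exp (u t)) t)
    (hu : ∀ x ∈ s, F x ∈ s → u x = ℓ x - c + u (F x)) (ha : a ∈ s) (hb : b ∈ s)
    (hFa : F a ∈ s) (hFb : F b ∈ s)
    (hF : ∀ t ∈ uIcc a b, HasDerivWithinAt F (k * Real.exp (ℓ t)) (uIcc a b) t) :
    h (F b) - h (F a) = k * Real.exp c * (h b - h a) := by
  refine sub_eq_mul_sub_of_hasDerivWithinAt hh hF fun t ht ↦ ?_
  have hFt : F t ∈ s := hs.uIcc_subset hFa hFb (mapsTo_uIcc_of_hasDerivWithinAt_mul_exp hF ht)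
  have hut : u (F t) + ℓ t = c + u t := by linarith [hu t (hs.uIcc_subset ha hb ht) hFt]
  calc Real.exp (u (F t)) * (k * Real.exp (ℓ t)) = k * Real.exp (u (F t) + ℓ t) := by
        rw [Real.exp_add]; ring
    _ = k * Real.exp c * Real.exp (u t) := by rw [hut, Real.exp_add]; ring

theorem HasSplitDerivOn.conjRelOn_enf {f ℓ h u : ℝ → ℝ} {kL kR c : ℝ} {s : Set ℝ}
    (hf : HasSplitDerivOn f ℓ kL kR s) (hs : s.OrdConnected) (h0 : 0 ∈ s) (hf0 : f 0 ∈ s)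
    (hh : ∀ t, HasDerivAt h (Real.exp (u t)) t) (hh0 : h 0 = 0) (hhf0 : h (f 0) = f 0)
    (hu : ∀ x ∈ s, f x ∈ s → u x = ℓ x - c + u (f x)) :
    ConjRelOn h f (enf (f 0) (kL * Real.exp c) (kR * Real.exp c) 0) s := by
  have hmono : StrictMono h := strictMono_of_hasDerivAt_pos hh fun t ↦ Real.exp_pos _
  intro x hx hfx
  rcases le_or_gt x 0 with hx0 | hx0
  · have hhx : h x ≤ 0 := hh0 ▸ hmono.monotone hx0
    have hIic : uIcc 0 x ⊆ Iic 0 := ordConnected_Iic.uIcc_subset self_mem_Iic hx0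
    have hlin := sub_eq_mul_sub_of_cohomological hs hh hu h0 hx hf0 hfx fun t ht ↦
      (hf.left t (hs.uIcc_subset h0 hx ht) (hIic ht)).mono hIic
    rw [hh0, hhf0] at hlin
    simp only [enf, if_pos hhx]
    linarith
  · have hhx : ¬ h x ≤ 0 := (hh0 ▸ hmono hx0 : 0 < h x).not_ge
    have hIci : uIcc 0 x ⊆ Ici 0 := ordConnected_Ici.uIcc_subset self_mem_Ici hx0.le
    have hlin := sub_eq_mul_sub_of_cohomological hs hh hu h0 hx hf0 hfx fun t ht ↦
      (hf.right t (hs.uIcc_subset h0 hx ht) (hIci ht)).mono hIci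
    rw [hh0, hhf0] at hlin
    simp only [enf, if_neg hhx]
    linarith

theorem exists_integral_exp_sub_eq_self {u : ℝ → ℝ} (hu : Continuous u) (ν : ℝ) :
    ∃ t, ∫ x in 0..ν, Real.exp (u x - u t) = ν := by
  obtain ⟨t, ht⟩ := exists_intervalIntegral_eq_mul (Real.continuous_exp.comp hu) 0 ν
  refine ⟨t, ?_⟩
  simp only [Function.comp_apply, sub_zero] at ht
  simp_rw [sub_eq_add_neg, Real.exp_add, intervalIntegral.integral_mul_const, ht]
  rw [mul_right_comm, ← Real.exp_add, add_neg_cancel, Real.exp_zero, one_mul]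

theorem abs_integral_exp_mem_Icc {v : ℝ → ℝ} {ε : ℝ} (hv : Continuous v) (hvε : ∀ x, |v x| ≤ ε)
    (x : ℝ) : |∫ t in 0..x, Real.exp (v t)| ∈ Icc (Real.exp (-ε) * |x|) (Real.exp ε * |x|) := by
  obtain ⟨t, ht⟩ := exists_intervalIntegral_eq_mul (Real.continuous_exp.comp hv) 0 x
  simp only [Function.comp_apply, sub_zero] at ht
  obtain ⟨hlow, hupp⟩ := abs_le.1 (hvε t)
  rw [ht, abs_mul, Real.abs_exp]
  exact ⟨by gcongr, by gcongr⟩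

theorem HasSplitDerivOn.exists_diffConjOn_enf {f ℓ : ℝ → ℝ} {J : Set ℝ} {κ K : ℝ≥0}
    {kL kR p x₀ : ℝ} (hf : HasSplitDerivOn f ℓ kL kR (Icc (-p) p))
    (hslope : SlopesIn f (Icc (-p) p) J) (hJ : IsSlopeRange κ J) (hκ : 0 < κ) (hκ1 : κ < 1)
    (hℓ : LipschitzOnWith K ℓ (Icc (-p) p)) (hp : 0 < p) (hf0 : |f 0| < (1 - κ) * p)
    (hx₀ : x₀ ∈ Icc (-p) p) (hfx₀ : f x₀ = x₀) :
    ∃ q₁ < 0, ∃ q₂ > 0,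
      DiffConjOn f (enf (f 0) (kL * Real.exp (ℓ x₀)) (kR * Real.exp (ℓ x₀)) 0)
        (Ioo (-p) p) (Ioo q₁ q₂) ∧
      |q₁| ∈ Icc (Real.exp (-(4 * K / (1 - κ) * p)) * p) (Real.exp (4 * K / (1 - κ) * p) * p) ∧
      |q₂| ∈ Icc (Real.exp (-(4 * K / (1 - κ) * p)) * p) (Real.exp (4 * K / (1 - κ) * p) * p) := by
  obtain ⟨u, hu, hubound, hueq⟩ := hslope.exists_cohomological_solution hJ hκ hκ1 hp
    hf.continuousOn hf0.le hx₀ hfx₀ hℓ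
  obtain ⟨t, ht⟩ := exists_integral_exp_sub_eq_self hu (f 0)
  let h (x : ℝ) : ℝ := ∫ y in 0..x, Real.exp (u y - u t)
  have hv : Continuous fun y ↦ u y - u t := hu.sub continuous_const
  have hexp : Continuous fun y ↦ Real.exp (u y - u t) := Real.continuous_exp.comp hv
  have hh : ∀ x, HasStrictDerivAt h (Real.exp (u x - u t)) x := fun x ↦
    hexp.integral_hasStrictDerivAt 0 x
  have hh0 : h 0 = 0 := intervalIntegral.integral_same
  have hmono : StrictMono h :=
    strictMono_of_hasDerivAt_pos (fun x ↦ (hh x).hasDerivAt) fun x ↦ Real.exp_pos _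
  have hvbound : ∀ y, |u y - u t| ≤ 4 * K / (1 - κ) * p := fun y ↦
    (abs_sub _ _).trans ((add_le_add (hubound y) (hubound t)).trans_eq (by ring))
  have hf0p : |f 0| < p := hf0.trans_le (mul_le_of_le_one_left hp.le (by simp))
  have hconj := (hf.mono Ioo_subset_Icc_self).conjRelOn_enf ordConnected_Ioo (by simpa using hp)
    (abs_lt.1 hf0p) (fun x ↦ (hh x).hasDerivAt) hh0 ht fun x hx hfx ↦ by
      rw [hueq x (Ioo_subset_Icc_self hx) (Ioo_subset_Icc_self hfx)]
      exact add_sub_assoc _ _ _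
  refine ⟨h (-p), hh0 ▸ hmono (neg_lt_zero.2 hp), h p, hh0 ▸ hmono hp, ⟨h, ?_, hconj⟩, ?_, ?_⟩
  · exact isDiffeoOn_Ioo_of_hasStrictDerivAt hh (fun x ↦ Real.exp_pos _) hexp _ _
  · simpa only [abs_neg, abs_of_pos hp] using abs_integral_exp_mem_Icc hv hvbound (-p)
  · simpa only [abs_of_pos hp] using abs_integral_exp_mem_Icc hv hvbound p

end Linearization

section LogDistortion

variable {F : ℝ → ℝ → ℝ}

theorem eventually_hasDerivAt_of_contDiffAt {q₀ : ℝ × ℝ}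
    (hF : ContDiffAt ℝ 1 (fun q : ℝ × ℝ ↦ F q.1 q.2) q₀) :
    ∀ᶠ q : ℝ × ℝ in 𝓝 q₀, HasDerivAt (fun x ↦ F x q.2)
      (fderiv ℝ (fun q : ℝ × ℝ ↦ F q.1 q.2) q (1, 0)) q.1 := by
  filter_upwards [hF.eventually (by simp)] with q hq
  have hinner : HasDerivAt (fun x : ℝ ↦ (x, q.2)) (1, 0) q.1 :=
    (hasDerivAt_id q.1).prodMk (hasDerivAt_const q.1 q.2)
  exact HasFDerivAt.comp_hasDerivAt q.1 (hq.differentiableAt one_ne_zero).hasFDerivAt hinner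

theorem contDiffAt_deriv_of_contDiffAt {q₀ : ℝ × ℝ}
    (hF : ContDiffAt ℝ 2 (fun q : ℝ × ℝ ↦ F q.1 q.2) q₀) :
    ContDiffAt ℝ 1 (fun q : ℝ × ℝ ↦ deriv (fun x ↦ F x q.2) q.1) q₀ := by
  have hfderiv : ContDiffAt ℝ 1 (fderiv ℝ fun q : ℝ × ℝ ↦ F q.1 q.2) q₀ :=
    hF.fderiv_right one_add_one_eq_two.le
  refine (hfderiv.clm_apply (contDiffAt_const (c := ((1 : ℝ), (0 : ℝ))))).congr_of_eventuallyEq ?_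
  filter_upwards [eventually_hasDerivAt_of_contDiffAt (hF.of_le one_le_two)] with q hq
  exact hq.deriv

/-- The logarithm of the distortion of `F(·, μ)` between `0` and `x`: where the two slopes have the
same sign, the slope at `x` is the slope at `0` times `exp (logDistortion F x μ)`. -/
noncomputable def logDistortion (F : ℝ → ℝ → ℝ) (x μ : ℝ) : ℝ :=
  Real.log (deriv (fun y ↦ F y μ) x / deriv (fun y ↦ F y μ) 0)

theorem logDistortion_zero_left (F : ℝ → ℝ → ℝ) (μ : ℝ) : logDistortion F 0 μ = 0 := by
  rw [logDistortion, Real.log_div_self]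

theorem contDiffAt_deriv_zero (hF : ContDiffAt ℝ 2 (fun q : ℝ × ℝ ↦ F q.1 q.2) (0, 0)) :
    ContDiffAt ℝ 1 (fun μ ↦ deriv (fun y ↦ F y μ) 0) 0 :=
  (contDiffAt_deriv_of_contDiffAt hF).comp (0 : ℝ) (contDiffAt_const.prodMk contDiffAt_id)

theorem contDiffAt_deriv_div_deriv_zero
    (hF : ContDiffAt ℝ 2 (fun q : ℝ × ℝ ↦ F q.1 q.2) (0, 0)) (ha : deriv (fun x ↦ F x 0) 0 ≠ 0) :
    ContDiffAt ℝ 1 (fun q : ℝ × ℝ ↦ deriv (fun y ↦ F y q.2) q.1 / deriv (fun y ↦ F y q.2) 0)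
      (0, 0) := by
  have hzero : ContDiffAt ℝ 1 (fun q : ℝ × ℝ ↦ deriv (fun y ↦ F y q.2) 0) (0, 0) :=
    ContDiffAt.comp (g := fun μ ↦ deriv (fun y ↦ F y μ) 0) (0, 0) (contDiffAt_deriv_zero hF)
      contDiffAt_snd
  exact (contDiffAt_deriv_of_contDiffAt hF).div hzero ha

theorem contDiffAt_logDistortion (hF : ContDiffAt ℝ 2 (fun q : ℝ × ℝ ↦ F q.1 q.2) (0, 0))
    (ha : deriv (fun x ↦ F x 0) 0 ≠ 0) :
    ContDiffAt ℝ 1 (fun q : ℝ × ℝ ↦ logDistortion F q.1 q.2) (0, 0) :=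
  (contDiffAt_deriv_div_deriv_zero hF ha).log (div_ne_zero ha ha)

theorem eventually_deriv_eq_mul_exp_logDistortion
    (hF : ContDiffAt ℝ 2 (fun q : ℝ × ℝ ↦ F q.1 q.2) (0, 0)) (ha : deriv (fun x ↦ F x 0) 0 ≠ 0) :
    ∀ᶠ q : ℝ × ℝ in 𝓝 (0, 0), deriv (fun y ↦ F y q.2) q.1 =
      deriv (fun y ↦ F y q.2) 0 * Real.exp (logDistortion F q.1 q.2) := by
  have hratio := (contDiffAt_deriv_div_deriv_zero hF ha).continuousAt.eventually
    (lt_mem_nhds (zero_lt_one.trans_eq (div_self ha).symm))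
  filter_upwards [hratio] with q hq
  rw [logDistortion, Real.exp_log hq, mul_div_cancel₀]
  exact (div_ne_zero_iff.1 hq.ne').2

/-- On `s ×ˢ s` in the `(x, μ)`-plane, `F` and `ℓ` are Lipschitz, `ℓ` vanishes for `x = 0`, and `F`
has `x`-derivative `k μ * exp (ℓ x μ)`, with values in `J`; the factor `k` depends continuously on
`μ` and is differentiable at `0`. -/
structure HasLogDistortionOn (F ℓ : ℝ → ℝ → ℝ) (k : ℝ → ℝ) (J : Set ℝ) (K : ℝ≥0) (s : Set ℝ) :
    Prop where
  lipschitzOnWith : LipschitzOnWith K (fun q : ℝ × ℝ ↦ F q.1 q.2) (s ×ˢ s)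
  lipschitzOnWith_log : LipschitzOnWith K (fun q : ℝ × ℝ ↦ ℓ q.1 q.2) (s ×ˢ s)
  log_zero : ∀ μ, ℓ 0 μ = 0
  continuousOn : ContinuousOn k s
  differentiableAt : DifferentiableAt ℝ k 0
  hasDerivAt : ∀ x ∈ s, ∀ μ ∈ s, HasDerivAt (fun y ↦ F y μ) (k μ * Real.exp (ℓ x μ)) x
  mem : ∀ x ∈ s, ∀ μ ∈ s, k μ * Real.exp (ℓ x μ) ∈ J

theorem eventually_smallSets_prod_self_subset {X : Type*} [TopologicalSpace X] {x : X}
    {t : Set (X × X)} (ht : t ∈ 𝓝 (x, x)) : ∀ᶠ s in (𝓝 x).smallSets, s ×ˢ s ⊆ t := by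
  rw [nhds_prod_eq] at ht
  obtain ⟨s, hs, hst⟩ := mem_prod_same_iff.1 ht
  exact eventually_smallSets.2 ⟨s, hs, fun s' hs' ↦ (prod_mono hs' hs').trans hst⟩

theorem exists_hasLogDistortionOn {J : Set ℝ}
    (hF : ContDiffAt ℝ 2 (fun q : ℝ × ℝ ↦ F q.1 q.2) (0, 0))
    (ha : deriv (fun x ↦ F x 0) 0 ≠ 0) (hJ : J ∈ 𝓝 (deriv (fun x ↦ F x 0) 0)) :
    ∃ K₀ : ℝ≥0, ∀ K ≥ K₀, ∀ᶠ s in (𝓝 (0 : ℝ)).smallSets,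
      HasLogDistortionOn F (logDistortion F) (fun μ ↦ deriv (fun y ↦ F y μ) 0) J K s := by
  have hlog := contDiffAt_logDistortion hF ha
  obtain ⟨K₁, t₁, ht₁, hlip₁⟩ := (hF.of_le one_le_two).exists_lipschitzOnWith
  obtain ⟨K₂, t₂, ht₂, hlip₂⟩ := hlog.exists_lipschitzOnWith
  have hderiv : ∀ᶠ q : ℝ × ℝ in 𝓝 (0, 0), HasDerivAt (fun y ↦ F y q.2)
      (deriv (fun y ↦ F y q.2) 0 * Real.exp (logDistortion F q.1 q.2)) q.1 := by
    filter_upwards [eventually_hasDerivAt_of_contDiffAt (hF.of_le one_le_two),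
      eventually_deriv_eq_mul_exp_logDistortion hF ha] with q hq hexp
    exact hexp ▸ hq.differentiableAt.hasDerivAt
  have hmem : ∀ᶠ q : ℝ × ℝ in 𝓝 (0, 0),
      deriv (fun y ↦ F y q.2) 0 * Real.exp (logDistortion F q.1 q.2) ∈ J := by
    filter_upwards [eventually_deriv_eq_mul_exp_logDistortion hF ha,
      (contDiffAt_deriv_of_contDiffAt hF).continuousAt hJ] with q hexp hq
    exact hexp ▸ hq
  have hcont := ((contDiffAt_deriv_zero hF).eventually (by simp)).mono fun μ hμ ↦ hμ.continuousAt
  refine ⟨max K₁ K₂, fun K hK ↦ ?_⟩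
  filter_upwards [eventually_smallSets_prod_self_subset ht₁,
    eventually_smallSets_prod_self_subset ht₂, eventually_smallSets_prod_self_subset hderiv,
    eventually_smallSets_prod_self_subset hmem, hcont.smallSets] with s hs₁ hs₂ hsderiv hsmem hscont
  exact
    { lipschitzOnWith := (hlip₁.mono hs₁).weaken ((le_max_left _ _).trans hK)
      lipschitzOnWith_log := (hlip₂.mono hs₂).weaken ((le_max_right _ _).trans hK)
      log_zero := logDistortion_zero_left F
      continuousOn := fun μ hμ ↦ (hscont μ hμ).continuousWithinAt
      differentiableAt := (contDiffAt_deriv_zero hF).differentiableAt one_ne_zero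
      hasDerivAt := fun x hx μ hμ ↦ hsderiv (mk_mem_prod hx hμ)
      mem := fun x hx μ hμ ↦ hsmem (mk_mem_prod hx hμ) }

end LogDistortion

section PiecewiseFamily

theorem pwFam_of_nonpos (FL FR : ℝ → ℝ → ℝ) (μ : ℝ) {x : ℝ} (hx : x ≤ 0) :
    pwFam FL FR μ x = FL x μ :=
  if_pos hx

theorem pwFam_of_nonneg {FL FR : ℝ → ℝ → ℝ} {μ x : ℝ} (h0 : FL 0 μ = FR 0 μ) (hx : 0 ≤ x) :
    pwFam FL FR μ x = FR x μ := by
  rcases hx.eq_or_lt with rfl | hx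
  · rw [pwFam_of_nonpos FL FR μ le_rfl, h0]
  · exact if_neg hx.not_ge

theorem lipschitzOnWith_prod_of_Iic_Ici {g : ℝ × ℝ → ℝ} {K : ℝ≥0} {s t : Set ℝ} (h0 : 0 ∈ s)
    (hL : LipschitzOnWith K g ((s ∩ Iic 0) ×ˢ t)) (hR : LipschitzOnWith K g ((s ∩ Ici 0) ×ˢ t)) :
    LipschitzOnWith (K + K) g (s ×ˢ t) := by
  have hmixed : ∀ q ∈ s ×ˢ t, ∀ q' ∈ s ×ˢ t, q.1 ≤ 0 → 0 ≤ q'.1 →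
      dist (g q) (g q') ≤ (K + K) * dist q q' := by
    intro q hq q' hq' hneg hpos
    have hdist : q'.1 - q.1 ≤ dist q q' :=
      (neg_sub q.1 q'.1).symm.trans_le ((neg_le_abs _).trans (le_max_left _ _))
    have hleft : dist q (0, q'.2) ≤ dist q q' := by
      refine max_le ?_ (le_max_right _ _)
      rw [Real.dist_eq, sub_zero, abs_of_nonpos hneg]
      linarith
    have hright : dist (0, q'.2) q' ≤ dist q q' := by
      refine max_le ?_ ((dist_self _).trans_le dist_nonneg)
      rw [Real.dist_eq, zero_sub, abs_neg, abs_of_nonneg hpos]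
      linarith
    calc dist (g q) (g q') ≤ dist (g q) (g (0, q'.2)) + dist (g (0, q'.2)) (g q') :=
          dist_triangle _ _ _
      _ ≤ K * dist q (0, q'.2) + K * dist (0, q'.2) q' := add_le_add
          (hL.dist_le_mul _ ⟨⟨hq.1, hneg⟩, hq.2⟩ _ ⟨⟨h0, self_mem_Iic⟩, hq'.2⟩)
          (hR.dist_le_mul (0, q'.2) ⟨⟨h0, self_mem_Ici⟩, hq'.2⟩ _ ⟨⟨hq'.1, hpos⟩, hq'.2⟩)
      _ ≤ (K + K) * dist q q' := by
          rw [add_mul]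
          gcongr
  have hKK : K ≤ K + K := le_add_of_nonneg_left K.2
  refine LipschitzOnWith.of_dist_le_mul fun q hq q' hq' ↦ ?_
  rcases le_total q.1 0 with hx | hx <;> rcases le_total q'.1 0 with hx' | hx'
  · exact (hL.weaken hKK).dist_le_mul q ⟨⟨hq.1, hx⟩, hq.2⟩ q' ⟨⟨hq'.1, hx'⟩, hq'.2⟩
  · exact hmixed q hq q' hq' hx hx'
  · rw [dist_comm, dist_comm q]
    exact hmixed q' hq' q hq hx' hx
  · exact (hR.weaken hKK).dist_le_mul q ⟨⟨hq.1, hx⟩, hq.2⟩ q' ⟨⟨hq'.1, hx'⟩, hq'.2⟩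

theorem lipschitzOnWith_pwFam {FL FR : ℝ → ℝ → ℝ} {K : ℝ≥0} {s t : Set ℝ} (h0 : 0 ∈ s)
    (hL : LipschitzOnWith K (fun q : ℝ × ℝ ↦ FL q.1 q.2) (s ×ˢ t))
    (hR : LipschitzOnWith K (fun q : ℝ × ℝ ↦ FR q.1 q.2) (s ×ˢ t))
    (hglue : ∀ μ ∈ t, FL 0 μ = FR 0 μ) :
    LipschitzOnWith (K + K) (fun q : ℝ × ℝ ↦ pwFam FL FR q.2 q.1) (s ×ˢ t) := by
  refine lipschitzOnWith_prod_of_Iic_Ici h0 (fun q hq q' hq' ↦ ?_) fun q hq q' hq' ↦ ?_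
  · simpa only [pwFam_of_nonpos FL FR _ hq.1.2, pwFam_of_nonpos FL FR _ hq'.1.2] using
      hL ⟨hq.1.1, hq.2⟩ ⟨hq'.1.1, hq'.2⟩
  · simpa only [pwFam_of_nonneg (hglue _ hq.2) hq.1.2, pwFam_of_nonneg (hglue _ hq'.2) hq'.1.2]
      using hR ⟨hq.1.1, hq.2⟩ ⟨hq'.1.1, hq'.2⟩

/-- A family `f μ` of maps which, for `x` and `μ` in `s`, have split derivatives with logarithmic
distortion `ℓ μ`, one-sided factors `kL μ`, `kR μ` and slopes in `J`, with Lipschitz dependence on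
`(x, μ)`. As in `pwFam`, and unlike in `HasLogDistortionOn`, the parameter is the first argument. -/
structure IsSplitFamilyOn (f ℓ : ℝ → ℝ → ℝ) (kL kR : ℝ → ℝ) (J : Set ℝ) (K : ℝ≥0) (s : Set ℝ) :
    Prop where
  lipschitzOnWith : LipschitzOnWith K (fun q : ℝ × ℝ ↦ f q.2 q.1) (s ×ˢ s)
  lipschitzOnWith_log : LipschitzOnWith K (fun q : ℝ × ℝ ↦ ℓ q.2 q.1) (s ×ˢ s)
  log_zero : ℓ 0 0 = 0
  continuousOn_left : ContinuousOn kL s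
  continuousOn_right : ContinuousOn kR s
  differentiableAt_left : DifferentiableAt ℝ kL 0
  differentiableAt_right : DifferentiableAt ℝ kR 0
  hasSplitDerivOn : ∀ μ ∈ s, HasSplitDerivOn (f μ) (ℓ μ) (kL μ) (kR μ) s
  slopesIn : ∀ μ ∈ s, SlopesIn (f μ) s J

theorem HasLogDistortionOn.isSplitFamilyOn_pwFam {FL FR ℓL ℓR : ℝ → ℝ → ℝ} {kL kR : ℝ → ℝ}
    {J s : Set ℝ} {K : ℝ≥0} (hL : HasLogDistortionOn FL ℓL kL J K s)
    (hR : HasLogDistortionOn FR ℓR kR J K s) (hglue : ∀ μ ∈ s, FL 0 μ = FR 0 μ)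
    (hs : s.OrdConnected) (h0 : 0 ∈ s) (hJ : Convex ℝ J) :
    IsSplitFamilyOn (pwFam FL FR) (pwFam ℓL ℓR) kL kR J (K + K) s := by
  have hlog : ∀ μ, ℓL 0 μ = ℓR 0 μ := fun μ ↦ (hL.log_zero μ).trans (hR.log_zero μ).symm
  have hsplit : ∀ μ ∈ s, HasSplitDerivOn (pwFam FL FR μ) (pwFam ℓL ℓR μ) (kL μ) (kR μ) s := by
    refine fun μ hμ ↦ ⟨fun x hx hx0 ↦ ?_, fun x hx hx0 ↦ ?_⟩
    · rw [pwFam_of_nonpos ℓL ℓR μ hx0]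
      exact (hL.hasDerivAt x hx μ hμ).hasDerivWithinAt.congr_of_mem
        (fun y hy ↦ pwFam_of_nonpos FL FR μ hy) hx0
    · rw [pwFam_of_nonneg (hlog μ) hx0]
      exact (hR.hasDerivAt x hx μ hμ).hasDerivWithinAt.congr_of_mem
        (fun y hy ↦ pwFam_of_nonneg (hglue μ hμ) hy) hx0
  exact
    { lipschitzOnWith := lipschitzOnWith_pwFam h0 hL.lipschitzOnWith hR.lipschitzOnWith hglue
      lipschitzOnWith_log :=
        lipschitzOnWith_pwFam h0 hL.lipschitzOnWith_log hR.lipschitzOnWith_log fun μ _ ↦ hlog μ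
      log_zero := (pwFam_of_nonpos ℓL ℓR 0 le_rfl).trans (hL.log_zero 0)
      continuousOn_left := hL.continuousOn
      continuousOn_right := hR.continuousOn
      differentiableAt_left := hL.differentiableAt
      differentiableAt_right := hR.differentiableAt
      hasSplitDerivOn := hsplit
      slopesIn := fun μ hμ ↦ (hsplit μ hμ).slopesIn hs h0 hJ
        (fun x hx hx0 ↦ pwFam_of_nonpos ℓL ℓR μ hx0 ▸ hL.mem x hx μ hμ)
        fun x hx hx0 ↦ pwFam_of_nonneg (hlog μ) hx0 ▸ hR.mem x hx μ hμ }

end PiecewiseFamily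

section NormalForm

theorem SlopesIn.one_sub_mul_abs_le_of_fixedPoint {f : ℝ → ℝ} {s J : Set ℝ} {κ : ℝ≥0} {x : ℝ}
    (h : SlopesIn f s J) (hJ : IsSlopeRange κ J) (hκ : 0 < κ) (h0 : 0 ∈ s) (hx : x ∈ s)
    (hfx : f x = x) : (1 - (κ : ℝ)) * |x| ≤ |f 0| := by
  simpa [hfx] using h.one_sub_mul_abs_sub_le hJ hκ hx h0

theorem isBigO_mul_exp_sub {k g : ℝ → ℝ} (hk : DifferentiableAt ℝ k 0)
    (hg : g =O[𝓝 0] fun μ ↦ μ) :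
    (fun μ ↦ k μ * Real.exp (g μ) - k 0) =O[𝓝 0] fun μ ↦ μ := by
  have hg0 : Tendsto g (𝓝 0) (𝓝 0) := hg.trans_tendsto tendsto_id
  have hexp : (fun μ ↦ Real.exp (g μ) - 1) =O[𝓝 0] fun μ ↦ μ := by
    have hcomp := (Real.hasDerivAt_exp 0).isBigO_sub.comp_tendsto hg0
    simp only [Function.comp_def, Real.exp_zero, sub_zero] at hcomp
    exact hcomp.trans hg
  have hk1 : k =O[𝓝 0] fun _ ↦ (1 : ℝ) := hk.continuousAt.isBigO_one ℝ
  have hksub : (fun μ ↦ k μ - k 0) =O[𝓝 0] fun μ ↦ μ := by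
    simpa using hk.hasDerivAt.isBigO_sub
  have hprod : (fun μ ↦ k μ * (Real.exp (g μ) - 1)) =O[𝓝 0] fun μ ↦ μ := by
    simpa using hk1.mul hexp
  refine (hprod.add hksub).congr_left fun μ ↦ ?_
  ring

theorem exists_exp_mul_mem_Ioo {r δ : ℝ} (C : ℝ) (hr : 0 < r) (hδ : 0 < δ) :
    ∃ p > 0, p < r ∧ 1 - δ < Real.exp (-(C * p)) ∧ Real.exp (C * p) < 1 + δ := by
  have hlow : ∀ᶠ p in 𝓝 (0 : ℝ), 1 - δ < Real.exp (-(C * p)) :=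
    (by fun_prop : Continuous fun p ↦ Real.exp (-(C * p))).continuousAt.eventually_const_lt
      (by simpa using hδ)
  have hupp : ∀ᶠ p in 𝓝 (0 : ℝ), Real.exp (C * p) < 1 + δ :=
    (by fun_prop : Continuous fun p ↦ Real.exp (C * p)).continuousAt.eventually_lt_const
      (by simpa using hδ)
  exact ((eventually_mem_nhdsWithin (s := Ioi 0)).and <| eventually_nhdsWithin_of_eventually_nhds
    ((gt_mem_nhds hr).and (hlow.and hupp))).exists

namespace IsSplitFamilyOn

variable {f ℓ : ℝ → ℝ → ℝ} {kL kR X : ℝ → ℝ} {J : Set ℝ} {κ K : ℝ≥0} {r μ₀ : ℝ}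

theorem exists_forall_abs_apply_zero_lt (hf : IsSplitFamilyOn f ℓ kL kR J K (Ioo (-r) r))
    (hf00 : f 0 0 = 0) {R ε : ℝ} (hr : 0 < r) (hR : 0 < R) (hε : 0 < ε) :
    ∃ μ₁ > 0, μ₁ ≤ R ∧ ∀ μ ∈ Ioo (-μ₁) μ₁, |f μ 0| < ε := by
  have hIoo : Ioo (-r) r ∈ 𝓝 (0 : ℝ) := Ioo_mem_nhds (neg_lt_zero.2 hr) hr
  have hjoint : ContinuousAt (fun q : ℝ × ℝ ↦ f q.2 q.1) (0, 0) :=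
    hf.lipschitzOnWith.continuousOn.continuousAt (prod_mem_nhds hIoo hIoo)
  have hcont : ContinuousAt (fun μ ↦ |f μ 0|) 0 :=
    (hjoint.comp (f := fun μ ↦ (0, μ)) (by fun_prop : ContinuousAt _ (0 : ℝ))).abs
  obtain ⟨μ₁, hμ₁, hlt⟩ := (nhds_basis_Ioo_pos (0 : ℝ)).eventually_iff.1
    (hcont.eventually_lt_const (by simpa [hf00] using hε))
  refine ⟨min μ₁ R, lt_min hμ₁ hR, min_le_right _ _, fun μ hμ ↦ hlt ?_⟩
  have hmin := min_le_left μ₁ R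
  exact ⟨by linarith [hμ.1], by linarith [hμ.2]⟩

theorem lipschitzOnWith_fixedPoint {s t : Set ℝ} (hf : IsSplitFamilyOn f ℓ kL kR J K s)
    (hJ : IsSlopeRange κ J) (hκ : 0 < κ) (hκ1 : κ < 1) (hts : t ⊆ s)
    (hX : ∀ μ ∈ t, X μ ∈ s ∧ f μ (X μ) = X μ) : LipschitzOnWith (K / (1 - κ)) X t := by
  refine LipschitzOnWith.of_dist_le_mul fun μ hμ μ' hμ' ↦ ?_
  obtain ⟨hXμ, hfixμ⟩ := hX μ hμ
  obtain ⟨hXμ', hfixμ'⟩ := hX μ' hμ'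
  have hκ1' : (0 : ℝ) < 1 - κ := sub_pos.2 (mod_cast hκ1)
  rw [NNReal.coe_div, NNReal.coe_sub hκ1.le, NNReal.coe_one, div_mul_eq_mul_div,
    le_div_iff₀ hκ1', mul_comm]
  calc (1 - (κ : ℝ)) * dist (X μ) (X μ')
      ≤ |(f μ (X μ) - X μ) - (f μ (X μ') - X μ')| :=
        (hf.slopesIn μ (hts hμ)).one_sub_mul_abs_sub_le hJ hκ hXμ hXμ'
    _ = dist (f μ' (X μ')) (f μ (X μ')) := by
        rw [hfixμ, hfixμ', Real.dist_eq]
        congr 1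
        ring
    _ ≤ K * dist (X μ', μ') (X μ', μ) :=
        hf.lipschitzOnWith.dist_le_mul (X μ', μ') ⟨hXμ', hts hμ'⟩ (X μ', μ) ⟨hXμ', hts hμ⟩
    _ = K * dist μ μ' := by rw [dist_prod_same_left, dist_comm]

theorem exists_fixedPoint_mem (hf : IsSplitFamilyOn f ℓ kL kR J K (Ioo (-r) r))
    (hJ : IsSlopeRange κ J) (hκ : 0 < κ) (hκ1 : κ < 1) {μ p : ℝ} (hμ : μ ∈ Ioo (-r) r)
    (hp : 0 < p) (hpr : p < r) (hf0 : |f μ 0| < (1 - κ) * p) :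
    ∃ x ∈ Ioo (-r) r, f μ x = x := by
  have hsub : Icc (-p) p ⊆ Ioo (-r) r := Icc_subset_Ioo (neg_lt_neg hpr) hpr
  obtain ⟨x, hx, hfx⟩ := ((hf.slopesIn μ hμ).mono hsub).exists_fixedPoint hJ hκ hκ1 hp
    ((hf.hasSplitDerivOn μ hμ).mono hsub).continuousOn hf0.le
  exact ⟨x, hsub hx, hfx⟩

theorem exists_diffConjOn_enf (hf : IsSplitFamilyOn f ℓ kL kR J K (Ioo (-r) r))
    (hJ : IsSlopeRange κ J) (hκ : 0 < κ) (hκ1 : κ < 1) {p μ x₀ : ℝ} (hp : 0 < p) (hpr : p < r)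
    (hμ : μ ∈ Ioo (-r) r) (hx₀ : x₀ ∈ Ioo (-r) r) (hfx₀ : f μ x₀ = x₀)
    (hf0 : |f μ 0| < (1 - κ) * p) :
    ∃ q₁ < 0, ∃ q₂ > 0,
      DiffConjOn (f μ)
        (enf (f μ 0) (kL μ * Real.exp (ℓ μ x₀)) (kR μ * Real.exp (ℓ μ x₀)) 0)
        (Ioo (-p) p) (Ioo q₁ q₂) ∧
      |q₁| ∈ Icc (Real.exp (-(4 * K / (1 - κ) * p)) * p) (Real.exp (4 * K / (1 - κ) * p) * p) ∧
      |q₂| ∈ Icc (Real.exp (-(4 * K / (1 - κ) * p)) * p) (Real.exp (4 * K / (1 - κ) * p) * p) := by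
  have hsub : Icc (-p) p ⊆ Ioo (-r) r := Icc_subset_Ioo (neg_lt_neg hpr) hpr
  have h0 : (0 : ℝ) ∈ Ioo (-r) r := ⟨by linarith, by linarith⟩
  have hx₀p : |x₀| ≤ p := by
    have hsep := (hf.slopesIn μ hμ).one_sub_mul_abs_le_of_fixedPoint hJ hκ h0 hx₀ hfx₀
    exact (lt_of_mul_lt_mul_left (hsep.trans_lt hf0) (sub_nonneg.2 (mod_cast hκ1.le))).le
  have hlog : LipschitzOnWith K (ℓ μ) (Icc (-p) p) := by
    simpa [Function.comp_def] using hf.lipschitzOnWith_log.comp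
      (LipschitzWith.prodMk_right μ).lipschitzOnWith fun x hx ↦ ⟨hsub hx, hμ⟩
  exact ((hf.hasSplitDerivOn μ hμ).mono hsub).exists_diffConjOn_enf
    ((hf.slopesIn μ hμ).mono hsub) hJ hκ hκ1 hlog hp hf0 (abs_le.1 hx₀p) hfx₀

theorem exists_lipschitzOnWith_fixedPoint (hf : IsSplitFamilyOn f ℓ kL kR J K (Ioo (-r) r))
    (hJ : IsSlopeRange κ J) (hκ : 0 < κ) (hκ1 : κ < 1) (hr : 0 < r) (hf00 : f 0 0 = 0) :
    ∃ μ₀ > 0, μ₀ ≤ r ∧ ∃ X : ℝ → ℝ, X 0 = 0 ∧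
      LipschitzOnWith (K / (1 - κ)) X (Ioo (-μ₀) μ₀) ∧
      ∀ μ ∈ Ioo (-μ₀) μ₀, |f μ 0| < (1 - κ) * (r / 2) ∧ X μ ∈ Ioo (-r) r ∧ f μ (X μ) = X μ := by
  have hκ1' : (0 : ℝ) < 1 - κ := sub_pos.2 (mod_cast hκ1)
  obtain ⟨μ₀, hμ₀, hμ₀r, hf0⟩ := hf.exists_forall_abs_apply_zero_lt hf00 hr hr
    (mul_pos hκ1' (half_pos hr))
  have hsub : Ioo (-μ₀) μ₀ ⊆ Ioo (-r) r := Ioo_subset_Ioo (neg_le_neg hμ₀r) hμ₀r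
  have hfix : ∀ μ ∈ Ioo (-μ₀) μ₀, ∃ x ∈ Ioo (-r) r, f μ x = x := fun μ hμ ↦
    hf.exists_fixedPoint_mem hJ hκ hκ1 (hsub hμ) (half_pos hr) (half_lt_self hr) (hf0 μ hμ)
  choose! X hX using hfix
  have hmem : (0 : ℝ) ∈ Ioo (-μ₀) μ₀ := ⟨neg_lt_zero.2 hμ₀, hμ₀⟩
  have hX0 : X 0 = 0 := by
    have hsep := (hf.slopesIn 0 (hsub hmem)).one_sub_mul_abs_le_of_fixedPoint hJ hκ (hsub hmem)
      (hX 0 hmem).1 (hX 0 hmem).2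
    rw [hf00, abs_zero] at hsep
    exact abs_nonpos_iff.1 (nonpos_of_mul_nonpos_right hsep hκ1')
  exact ⟨μ₀, hμ₀, hμ₀r, X, hX0, hf.lipschitzOnWith_fixedPoint hJ hκ hκ1 hsub hX,
    fun μ hμ ↦ ⟨hf0 μ hμ, hX μ hμ⟩⟩

theorem lipschitzOnWith_log_comp {s t : Set ℝ} (hf : IsSplitFamilyOn f ℓ kL kR J K s) {K' : ℝ≥0}
    (hX : LipschitzOnWith K' X t) (hts : t ⊆ s) (hXs : MapsTo X t s) :
    LipschitzOnWith (K * max K' 1) (fun μ ↦ ℓ μ (X μ)) t :=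
  hf.lipschitzOnWith_log.comp (hX.prodMk LipschitzWith.id.lipschitzOnWith)
    fun _ hμ ↦ ⟨hXs hμ, hts hμ⟩

theorem isBigO_log_comp {s t : Set ℝ} (hf : IsSplitFamilyOn f ℓ kL kR J K s) {K' : ℝ≥0}
    (hX : LipschitzOnWith K' X t) (hX0 : X 0 = 0) (ht : t ∈ 𝓝 0) (hts : t ⊆ s)
    (hXs : MapsTo X t s) : (fun μ ↦ ℓ μ (X μ)) =O[𝓝 0] fun μ ↦ μ := by
  refine .of_bound (K * max K' 1 : ℝ≥0) ?_
  filter_upwards [ht] with μ hμ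
  simpa [hX0, hf.log_zero] using
    (hf.lipschitzOnWith_log_comp hX hts hXs).dist_le_mul μ hμ 0 (mem_of_mem_nhds ht)

theorem exists_forall_diffConjOn_enf (hf : IsSplitFamilyOn f ℓ kL kR J K (Ioo (-r) r))
    (hJ : IsSlopeRange κ J) (hκ : 0 < κ) (hκ1 : κ < 1) (hr : 0 < r) (hf00 : f 0 0 = 0)
    (hμ₀ : 0 < μ₀) (hμ₀r : μ₀ ≤ r) (hX : ∀ μ ∈ Ioo (-μ₀) μ₀, X μ ∈ Ioo (-r) r ∧ f μ (X μ) = X μ)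
    {δ : ℝ} (hδ : 0 < δ) :
    ∃ μ₁ > 0, μ₁ ≤ μ₀ ∧ ∃ p > 0, p < r ∧ ∃ q₁ q₂ : ℝ → ℝ, ∀ μ ∈ Ioo (-μ₁) μ₁,
      q₁ μ < 0 ∧ 0 < q₂ μ ∧
      DiffConjOn (f μ)
        (enf (f μ 0) (kL μ * Real.exp (ℓ μ (X μ))) (kR μ * Real.exp (ℓ μ (X μ))) 0)
        (Ioo (-p) p) (Ioo (q₁ μ) (q₂ μ)) ∧
      |q₁ μ| ∈ Ioo ((1 - δ) * p) ((1 + δ) * p) ∧ |q₂ μ| ∈ Ioo ((1 - δ) * p) ((1 + δ) * p) := by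
  obtain ⟨p, hp, hpr, hlow, hupp⟩ := exists_exp_mul_mem_Ioo (4 * K / (1 - κ)) hr hδ
  obtain ⟨μ₁, hμ₁, hμ₁μ₀, hf0⟩ := hf.exists_forall_abs_apply_zero_lt hf00 hr hμ₀
    (mul_pos (sub_pos.2 (mod_cast hκ1 : (κ : ℝ) < 1)) hp)
  have hsub : Ioo (-μ₁) μ₁ ⊆ Ioo (-μ₀) μ₀ := Ioo_subset_Ioo (neg_le_neg hμ₁μ₀) hμ₁μ₀
  have hsub' : Ioo (-μ₀) μ₀ ⊆ Ioo (-r) r := Ioo_subset_Ioo (neg_le_neg hμ₀r) hμ₀r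
  have hbound : Icc (Real.exp (-(4 * K / (1 - κ) * p)) * p) (Real.exp (4 * K / (1 - κ) * p) * p) ⊆
      Ioo ((1 - δ) * p) ((1 + δ) * p) :=
    Icc_subset_Ioo (mul_lt_mul_of_pos_right hlow hp) (mul_lt_mul_of_pos_right hupp hp)
  have hconj := fun μ (hμ : μ ∈ Ioo (-μ₁) μ₁) ↦ hf.exists_diffConjOn_enf hJ hκ hκ1 hp hpr
    (hsub' (hsub hμ)) (hX μ (hsub hμ)).1 (hX μ (hsub hμ)).2 (hf0 μ hμ)
  choose! q₁ hq₁ q₂ hq₂ hconj hlen₁ hlen₂ using hconj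
  exact ⟨μ₁, hμ₁, hμ₁μ₀, p, hp, hpr, q₁, q₂, fun μ hμ ↦
    ⟨hq₁ μ hμ, hq₂ μ hμ, hconj μ hμ, hbound (hlen₁ μ hμ), hbound (hlen₂ μ hμ)⟩⟩

end IsSplitFamilyOn

theorem exists_isSplitFamilyOn_pwFam {fL fR : ℝ → ℝ → ℝ} {J s : Set ℝ} (hJ : Convex ℝ J)
    (hfL : ContDiffAt ℝ 2 (fun q : ℝ × ℝ ↦ fL q.1 q.2) (0, 0))
    (hfR : ContDiffAt ℝ 2 (fun q : ℝ × ℝ ↦ fR q.1 q.2) (0, 0))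
    (hglue : ∀ᶠ μ in 𝓝 0, fL 0 μ = fR 0 μ)
    (haL : deriv (fun x ↦ fL x 0) 0 ≠ 0) (haR : deriv (fun x ↦ fR x 0) 0 ≠ 0)
    (hJL : J ∈ 𝓝 (deriv (fun x ↦ fL x 0) 0)) (hJR : J ∈ 𝓝 (deriv (fun x ↦ fR x 0) 0))
    (hs : s ∈ 𝓝 0) :
    ∃ r > 0, Ioo (-r) r ⊆ s ∧ ∃ K, IsSplitFamilyOn (pwFam fL fR)
      (pwFam (logDistortion fL) (logDistortion fR)) (fun μ ↦ deriv (fun x ↦ fL x μ) 0)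
      (fun μ ↦ deriv (fun x ↦ fR x μ) 0) J K (Ioo (-r) r) := by
  obtain ⟨KL, hL⟩ := exists_hasLogDistortionOn hfL haL hJL
  obtain ⟨KR, hR⟩ := exists_hasLogDistortionOn hfR haR hJR
  obtain ⟨t, ht, hgood⟩ := eventually_smallSets.1 <|
    (hL (max KL KR) (le_max_left _ _)).and <| (hR (max KL KR) (le_max_right _ _)).and <|
      hglue.smallSets.and (eventually_smallSets_subset.2 hs)
  obtain ⟨r, hr, hrt⟩ := (nhds_basis_Ioo_pos (0 : ℝ)).mem_iff.1 ht
  rw [zero_sub, zero_add] at hrt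
  obtain ⟨hLr, hRr, hgluer, hrs⟩ := hgood _ hrt
  exact ⟨r, hr, hrs, _, hLr.isSplitFamilyOn_pwFam hRr hgluer ordConnected_Ioo
    ⟨neg_lt_zero.2 hr, hr⟩ hJ⟩

end NormalForm

theorem stmt0_general {Ω I : Set ℝ} {aL aR : ℝ} {fL fR : ℝ → ℝ → ℝ}
    (hΩ : Ω ∈ 𝓝 0) (hI : I ∈ 𝓝 0)
    (hfL : ContDiffAt ℝ 2 (fun p : ℝ × ℝ ↦ fL p.1 p.2) (0, 0))
    (hfR : ContDiffAt ℝ 2 (fun p : ℝ × ℝ ↦ fR p.1 p.2) (0, 0))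
    (hcont : ∀ᶠ μ in 𝓝 0, fL 0 μ = fR 0 μ) (hbcb : fL 0 0 = 0)
    (haL : deriv (fun x ↦ fL x 0) 0 = aL) (haR : deriv (fun x ↦ fR x 0) 0 = aR)
    (h1 : (aL - 1) * (aR - 1) > 0) (h2 : (aL + 1) * (aR + 1) > 0)
    (haL0 : aL ≠ 0) (haR0 : aR ≠ 0) :
    ∃ μ₀ > 0, Ioo (-μ₀) μ₀ ⊆ I ∧
      ∃ sL sR : ℝ → ℝ,
        ContinuousOn sL (Ioo (-μ₀) μ₀) ∧ ContinuousOn sR (Ioo (-μ₀) μ₀) ∧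
        (fun μ ↦ sL μ - aL) =O[𝓝 0] (fun μ ↦ μ) ∧
        (fun μ ↦ sR μ - aR) =O[𝓝 0] (fun μ ↦ μ) ∧
        (∃ N : Set ℝ, IsOpen N ∧ 0 ∈ N ∧ N ⊆ Ω ∧
          ∃ M : ℝ → Set ℝ, ∀ μ ∈ Ioo (-μ₀) μ₀,
            IsOpen (M μ) ∧ 0 ∈ M μ ∧
            DiffConjOn (pwFam fL fR μ) (enf (fL 0 μ) (sL μ) (sR μ) 0) N (M μ)) ∧
        (∀ δ > 0, ∃ μ₁ > 0, μ₁ ≤ μ₀ ∧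
          ∃ p > 0, Ioo (-p) p ⊆ Ω ∧
            ∃ qm qp : ℝ → ℝ, ∀ μ ∈ Ioo (-μ₁) μ₁,
              qm μ < 0 ∧ 0 < qp μ ∧
              DiffConjOn (pwFam fL fR μ) (enf (fL 0 μ) (sL μ) (sR μ) 0)
                (Ioo (-p) p) (Ioo (qm μ) (qp μ)) ∧
              (1 - δ) * p < |qm μ| ∧ |qm μ| < (1 + δ) * p ∧
              (1 - δ) * p < |qp μ| ∧ |qp μ| < (1 + δ) * p) := by
  subst haL haR
  obtain ⟨κ, hκ, hκ1, J, hJ, hJL, hJR⟩ := exists_isSlopeRange_mem_nhds h1 h2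
  obtain ⟨r, hr, hrs, K, hf⟩ := exists_isSplitFamilyOn_pwFam hJ.convex hfL hfR hcont haL0 haR0
    hJL hJR (inter_mem hΩ hI)
  have hν : ∀ μ, fL 0 μ = pwFam fL fR μ 0 := fun μ ↦ (pwFam_of_nonpos fL fR μ le_rfl).symm
  have hf00 : pwFam fL fR 0 0 = 0 := (hν 0).symm.trans hbcb
  obtain ⟨μ₀, hμ₀, hμ₀r, X, hX0, hXlip, hX⟩ :=
    hf.exists_lipschitzOnWith_fixedPoint hJ hκ hκ1 hr hf00
  have hsub : Ioo (-μ₀) μ₀ ⊆ Ioo (-r) r := Ioo_subset_Ioo (neg_le_neg hμ₀r) hμ₀r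
  have hXmaps : MapsTo X (Ioo (-μ₀) μ₀) (Ioo (-r) r) := fun μ hμ ↦ (hX μ hμ).2.1
  have hlog := hf.isBigO_log_comp hXlip hX0 (Ioo_mem_nhds (neg_lt_zero.2 hμ₀) hμ₀) hsub hXmaps
  have hexp := (hf.lipschitzOnWith_log_comp hXlip hsub hXmaps).continuousOn.rexp
  simp only [hν]
  refine ⟨μ₀, hμ₀, fun μ hμ ↦ (hrs (hsub hμ)).2, _, _, (hf.continuousOn_left.mono hsub).mul hexp,
    (hf.continuousOn_right.mono hsub).mul hexp, isBigO_mul_exp_sub hf.differentiableAt_left hlog,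
    isBigO_mul_exp_sub hf.differentiableAt_right hlog, ?_, fun δ hδ ↦ ?_⟩
  · have hconj := fun μ (hμ : μ ∈ Ioo (-μ₀) μ₀) ↦ hf.exists_diffConjOn_enf hJ hκ hκ1 (half_pos hr)
      (half_lt_self hr) (hsub hμ) (hX μ hμ).2.1 (hX μ hμ).2.2 (hX μ hμ).1
    choose! q₁ hq₁ q₂ hq₂ hconj _ using hconj
    have hrr : Ioo (-(r / 2)) (r / 2) ⊆ Ioo (-r) r := Ioo_subset_Ioo (by linarith) (by linarith)
    exact ⟨_, isOpen_Ioo, ⟨by linarith, half_pos hr⟩, fun x hx ↦ (hrs (hrr hx)).1,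
      fun μ ↦ Ioo (q₁ μ) (q₂ μ), fun μ hμ ↦ ⟨isOpen_Ioo, ⟨hq₁ μ hμ, hq₂ μ hμ⟩, hconj μ hμ⟩⟩
  · obtain ⟨μ₁, hμ₁, hμ₁μ₀, p, hp, hpr, q₁, q₂, hq⟩ := hf.exists_forall_diffConjOn_enf hJ hκ hκ1 hr
      hf00 hμ₀ hμ₀r (fun μ hμ ↦ (hX μ hμ).2) hδ
    refine ⟨μ₁, hμ₁, hμ₁μ₀, p, hp, fun x hx ↦ ?_, q₁, q₂, fun μ hμ ↦ ?_⟩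
    · exact (hrs (Ioo_subset_Ioo (neg_le_neg hpr.le) hpr.le hx)).1
    · obtain ⟨hneg, hpos, hconj, hlen₁, hlen₂⟩ := hq μ hμ
      exact ⟨hneg, hpos, hconj, hlen₁.1, hlen₁.2, hlen₂.1, hlen₂.2⟩

/-- Theorem 2.1 (trivial border-collision bifurcations).
Here `Ω = (ω₁, ω₂)` and `I = (ι₁, ι₂)` are the open intervals containing `0` on which the
piecewise-`C²` family is defined, `aL, aR` are the one-sided slopes at the bifurcation,
and `β` is the common `μ`-derivative at the origin; `ν(μ) = f(0;μ) = f_L(0;μ)`. -/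
theorem stmt0 (ω₁ ω₂ ι₁ ι₂ aL aR β : ℝ) (fL fR : ℝ → ℝ → ℝ)
    (hω₁ : ω₁ < 0) (hω₂ : 0 < ω₂) (hι₁ : ι₁ < 0) (hι₂ : 0 < ι₂)
    (hfL : ContDiffOn ℝ 2 (fun p : ℝ × ℝ => fL p.1 p.2) (Set.Ioo ω₁ ω₂ ×ˢ Set.Ioo ι₁ ι₂))
    (hfR : ContDiffOn ℝ 2 (fun p : ℝ × ℝ => fR p.1 p.2) (Set.Ioo ω₁ ω₂ ×ˢ Set.Ioo ι₁ ι₂))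
    (hcont : ∀ μ ∈ Set.Ioo ι₁ ι₂, fL 0 μ = fR 0 μ)
    (hbcb : fL 0 0 = 0)
    (haL : deriv (fun x => fL x 0) 0 = aL)
    (haR : deriv (fun x => fR x 0) 0 = aR)
    (hβL : deriv (fun μ => fL 0 μ) 0 = β)
    (hβR : deriv (fun μ => fR 0 μ) 0 = β)
    (hβ : 0 < β)
    (h1 : (aL - 1) * (aR - 1) > 0) (h2 : (aL + 1) * (aR + 1) > 0)
    (haL0 : aL ≠ 0) (haR0 : aR ≠ 0) :
    ∃ μ₀ > 0, Set.Ioo (-μ₀) μ₀ ⊆ Set.Ioo ι₁ ι₂ ∧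
      ∃ sL sR : ℝ → ℝ,
        ContinuousOn sL (Set.Ioo (-μ₀) μ₀) ∧ ContinuousOn sR (Set.Ioo (-μ₀) μ₀) ∧
        (fun μ => sL μ - aL) =O[nhds (0:ℝ)] (fun μ => μ) ∧
        (fun μ => sR μ - aR) =O[nhds (0:ℝ)] (fun μ => μ) ∧
        (∃ N : Set ℝ, IsOpen N ∧ (0:ℝ) ∈ N ∧ N ⊆ Set.Ioo ω₁ ω₂ ∧
          ∃ M : ℝ → Set ℝ, ∀ μ ∈ Set.Ioo (-μ₀) μ₀,
            IsOpen (M μ) ∧ (0:ℝ) ∈ M μ ∧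
            DiffConjOn (pwFam fL fR μ) (enf (fL 0 μ) (sL μ) (sR μ) 0) N (M μ)) ∧
        (∀ δ > 0, ∃ μ₁ > 0, μ₁ ≤ μ₀ ∧
          ∃ p > 0, Set.Ioo (-p) p ⊆ Set.Ioo ω₁ ω₂ ∧
            ∃ qm qp : ℝ → ℝ, ∀ μ ∈ Set.Ioo (-μ₁) μ₁,
              qm μ < 0 ∧ 0 < qp μ ∧
              DiffConjOn (pwFam fL fR μ) (enf (fL 0 μ) (sL μ) (sR μ) 0)
                (Set.Ioo (-p) p) (Set.Ioo (qm μ) (qp μ)) ∧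
              (1 - δ) * p < |qm μ| ∧ |qm μ| < (1 + δ) * p ∧
              (1 - δ) * p < |qp μ| ∧ |qp μ| < (1 + δ) * p) := by
  exact stmt0_general (Ioo_mem_nhds hω₁ hω₂) (Ioo_mem_nhds hι₁ hι₂)
    (hfL.contDiffAt (prod_mem_nhds (Ioo_mem_nhds hω₁ hω₂) (Ioo_mem_nhds hι₁ hι₂)))
    (hfR.contDiffAt (prod_mem_nhds (Ioo_mem_nhds hω₁ hω₂) (Ioo_mem_nhds hι₁ hι₂)))
    (eventually_of_mem (Ioo_mem_nhds hι₁ hι₂) hcont) hbcb haL haR h1 h2 haL0 haR0
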